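/- Let 𝒮₀ be a nonempty decreasing subset of 𝒮. Then inf_{μ∈𝒞(𝒮₀)} Λ_{δ,𝒮₀}(μ) equals the infimum of Σ_{z∈V_S} μ(z)·R(q(z,·)‖p_{E₀}(z,·)) over all triples (μ,E₀,q) with E₀∈𝒮₀, q∈𝒯_S, μ∈𝒫(V_S), supp(μ|₁)⊆E₀ and μq=μ. -/

import Mathlib

open scoped BigOperators Classical ENNReal
open Filter Topology

noncomputable section
namespace ORRW

/-- Probability measures on a finite type `A`, topologized as a subset of `ℝ^A`. -/
abbrev ProbMeas (A : Type) [Fintype A] : Type :=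
  {p : A → ℝ // (∀ a, 0 ≤ p a) ∧ ∑ a, p a = 1}

/-- Relative entropy `R(γ‖ρ)` between two finitely supported "rows", valued in `EReal`,
with `+∞` when absolute continuity fails. -/
def relEnt {A : Type} [Fintype A] (γ ρ : A → ℝ) : EReal :=
  if ∀ a, ρ a = 0 → γ a = 0 then ((∑ a, γ a * Real.log (γ a / ρ a) : ℝ) : EReal)
  else (⊤ : EReal)

/-- `∫ R(q‖p) dν = Σ_a ν(a) · R(q(a,·)‖p(a,·))`. -/
def relEntInt {A : Type} [Fintype A] (ν : A → ℝ) (q p : A → A → ℝ) : EReal :=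
  ∑ a, (ν a : EReal) * relEnt (q a) (p a)

/-- `ν` is an invariant measure of the kernel `q`. -/
def Invariant {A : Type} [Fintype A] (ν : A → ℝ) (q : A → A → ℝ) : Prop :=
  ∀ y, ∑ x, ν x * q x y = ν y

/-- Extended-real logarithm: `⊥` at nonpositive arguments. -/
def elog (x : ℝ) : EReal := if x ≤ 0 then (⊥ : EReal) else ((Real.log x : ℝ) : EReal)

/-- Empirical measure of a finite trajectory `f : Fin (n+1) → A`. -/
def empMeas {A : Type} [Fintype A] [DecidableEq A] (n : ℕ) (f : Fin (n + 1) → A) :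
    ProbMeas A :=
  ⟨fun a => ((Finset.univ.filter (fun i => f i = a)).card : ℝ) / (n + 1),
    fun a => by positivity, by
      have key : ∑ a : A, ((Finset.univ.filter (fun i => f i = a)).card) = n + 1 := by
        have h := Finset.card_eq_sum_card_fiberwise
          (s := (Finset.univ : Finset (Fin (n + 1)))) (t := (Finset.univ : Finset A))
          (f := f) (fun i _ => Finset.mem_univ (f i))
        simpa using h.symm
      have key' : ∑ a : A, (((Finset.univ.filter (fun i => f i = a)).card : ℝ)) = (n : ℝ) + 1 := by
        have h2 := congrArg (fun m : ℕ => (m : ℝ)) key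
        push_cast at h2
        simpa using h2
      rw [← Finset.sum_div, key', div_self (by positivity)]⟩

section Graph

variable {V : Type} [Fintype V] [DecidableEq V]

/-- Weight of an edge given the set `F` of already traversed edges. -/
def gw (δ : ℝ) (F : Finset (Sym2 V)) (e : Sym2 V) : ℝ := if e ∈ F then δ else 1

/-- The transition kernel `p̂_F` on `V`. -/
def phat (G : SimpleGraph V) [DecidableRel G.Adj] (δ : ℝ) (F : Finset (Sym2 V))
    (x y : V) : ℝ :=
  if G.Adj x y then gw δ F s(x, y) / ∑ z ∈ G.neighborFinset x, gw δ F s(x, z) else 0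

/-- Two edges are adjacent iff they share a vertex. -/
def edgeAdj (e e' : Sym2 V) : Prop := ∃ v, v ∈ e ∧ v ∈ e'

/-- `x` is a vertex of the edge set `F`. -/
def memVerts (F : Finset (Sym2 V)) (x : V) : Prop := ∃ e ∈ F, x ∈ e

/-- `𝒯_G`: stochastic matrices on `V` adapted to `G`. -/
def TG (G : SimpleGraph V) : Set (V → V → ℝ) :=
  {q | (∀ x y, 0 ≤ q x y) ∧ (∀ x, ∑ y, q x y = 1) ∧ ∀ x y, q x y ≠ 0 → G.Adj x y}

/-- `𝒯(F)`: stochastic kernels from the vertex set of `F` to `V`, supported on `F`. -/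
def TE (F : Finset (Sym2 V)) : Set (V → V → ℝ) :=
  {q | (∀ x y, 0 ≤ q x y) ∧ (∀ x, memVerts F x → ∑ y, q x y = 1) ∧
    ∀ x y, q x y ≠ 0 → s(x, y) ∈ F}

/-- `ℰ`: admissible increasing sequences of traversed edge sets. -/
def seqE (G : SimpleGraph V) [DecidableRel G.Adj] (v₁ : V) :
    Set (Fin G.edgeFinset.card → Finset (Sym2 V)) :=
  {Es | (∀ k, Es k ⊆ G.edgeFinset) ∧ (∀ k, (Es k).card = (k : ℕ) + 1) ∧
    (∀ k l : Fin G.edgeFinset.card, (k : ℕ) + 1 = (l : ℕ) → Es k ⊂ Es l) ∧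
    (∀ k : Fin G.edgeFinset.card, (k : ℕ) = 0 → ∃ e ∈ Es k, v₁ ∈ e) ∧
    (∀ k l : Fin G.edgeFinset.card, (k : ℕ) + 1 = (l : ℕ) →
      ∀ e ∈ Es l \ Es k, ∃ e' ∈ Es k, edgeAdj e e')}

/-- The rate function `I_δ`. -/
def Ifun (G : SimpleGraph V) [DecidableRel G.Adj] (v₁ : V) (δ : ℝ) (ν : ProbMeas V) : EReal :=
  sInf { c : EReal |
    ∃ (νs : Fin G.edgeFinset.card → ProbMeas V) (r : Fin G.edgeFinset.card → ℝ)
      (Es : Fin G.edgeFinset.card → Finset (Sym2 V))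
      (qs : Fin G.edgeFinset.card → V → V → ℝ),
      Es ∈ seqE G v₁ ∧ (∀ k, 0 ≤ r k) ∧ (∑ k, r k = 1) ∧
      (∀ k x, (νs k).1 x ≠ 0 → memVerts (Es k) x) ∧
      (∀ x, ∑ k, r k * (νs k).1 x = ν.1 x) ∧
      (∀ k, qs k ∈ TE (Es k)) ∧ (∀ k, Invariant (νs k).1 (qs k)) ∧
      c = ∑ k, ((r k : ℝ) : EReal) * relEntInt (νs k).1 (qs k) (phat G δ (Es k)) }

/-- Edges traversed along a path, given as a list of consecutively visited vertices. -/
def pathEdges : List V → Finset (Sym2 V)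
  | [] => ∅
  | [_] => ∅
  | x :: y :: t => insert s(x, y) (pathEdges (y :: t))

/-- Product of one-step ORRW transition probabilities along a trajectory,
the trajectory being listed in reverse chronological order. -/
def stepsProb (G : SimpleGraph V) [DecidableRel G.Adj] (δ : ℝ) : List V → ℝ
  | [] => 1
  | [_] => 1
  | y :: x :: t => phat G δ (pathEdges (x :: t).reverse) x y * stepsProb G δ (x :: t)

/-- The law of `(X_0, …, X_n)` for the `δ`-ORRW started at `v₁`. -/
def trajProb (G : SimpleGraph V) [DecidableRel G.Adj] (δ : ℝ) (v₁ : V) (n : ℕ)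
    (f : Fin (n + 1) → V) : ℝ :=
  if f 0 = v₁ then stepsProb G δ (List.ofFn f).reverse else 0

/-- `P_{v₁}(L_{n+1} ∈ C)`: the probability that the empirical measure of the first
`n+1` positions of the `δ`-ORRW lies in `C`. -/
def probEmp (G : SimpleGraph V) [DecidableRel G.Adj] (δ : ℝ) (v₁ : V) (n : ℕ)
    (C : Set (ProbMeas V)) : ℝ :=
  ∑ f : Fin (n + 1) → V, if empMeas n f ∈ C then trajProb G δ v₁ n f else 0

/-- The family `𝒮` of edge sets of connected subgraphs having an edge at `v₁`. -/
def scrS (G : SimpleGraph V) [DecidableRel G.Adj] (v₁ : V) : Set (Finset (Sym2 V)) :=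
  {F | F ⊆ G.edgeFinset ∧ (∃ e ∈ F, v₁ ∈ e) ∧
    ∀ x y : V, memVerts F x → memVerts F y →
      (SimpleGraph.fromEdgeSet (↑F : Set (Sym2 V))).Reachable x y}

/-- `𝒮₀` is a decreasing subset of `𝒮`. -/
def DecreasingIn (G : SimpleGraph V) [DecidableRel G.Adj] (v₁ : V)
    (S0 : Set (Finset (Sym2 V))) : Prop :=
  ∀ F₁ F₂, F₁ ∈ scrS G v₁ → F₂ ∈ scrS G v₁ → F₁ ⊆ F₂ → F₂ ∈ S0 → F₁ ∈ S0

/-- `P_{v₁}(T_{𝒮₀} > n)`. -/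
def probTgt (G : SimpleGraph V) [DecidableRel G.Adj] (δ : ℝ) (v₁ : V)
    (S0 : Set (Finset (Sym2 V))) (n : ℕ) : ℝ :=
  ∑ f : Fin (n + 1) → V,
    if ∀ k, 1 ≤ k → k ≤ n → pathEdges ((List.ofFn f).take (k + 1)) ∈ S0 then
      trajProb G δ v₁ n f
    else 0

/-- `P_{v₁}(C_E > n)` for the edge cover time `C_E`. -/
def probCgt (G : SimpleGraph V) [DecidableRel G.Adj] (δ : ℝ) (v₁ : V) (n : ℕ) : ℝ :=
  ∑ f : Fin (n + 1) → V,
    if ¬ G.edgeFinset ⊆ pathEdges (List.ofFn f) then trajProb G δ v₁ n f else 0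

/-- `E_{v₁}[exp (α T_{𝒮₀})]`, valued in `ℝ≥0∞`; the stopping time takes values in
`{1, 2, …} ∪ {∞}`. -/
def expT (G : SimpleGraph V) [DecidableRel G.Adj] (δ : ℝ) (v₁ : V)
    (S0 : Set (Finset (Sym2 V))) (α : ℝ) : ℝ≥0∞ :=
  (∑' n : ℕ, ENNReal.ofReal
      (Real.exp (α * (n + 1)) * (probTgt G δ v₁ S0 n - probTgt G δ v₁ S0 (n + 1)))) +
    (if 0 < α then (⊤ : ℝ≥0∞) else if α = 0 then 1 else 0) *
      ENNReal.ofReal (⨅ n : ℕ, probTgt G δ v₁ S0 n)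

/-- `E_{v₁}[exp (α C_E)]`, valued in `ℝ≥0∞`. -/
def expC (G : SimpleGraph V) [DecidableRel G.Adj] (δ : ℝ) (v₁ : V) (α : ℝ) : ℝ≥0∞ :=
  (∑' n : ℕ, ENNReal.ofReal
      (Real.exp (α * (n + 1)) * (probCgt G δ v₁ n - probCgt G δ v₁ (n + 1)))) +
    (if 0 < α then (⊤ : ℝ≥0∞) else if α = 0 then 1 else 0) *
      ENNReal.ofReal (⨅ n : ℕ, probCgt G δ v₁ n)

/-- The critical exponent `α_c(δ)` attached to a family `𝒮₀` of edge sets. -/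
def alphaC (G : SimpleGraph V) [DecidableRel G.Adj] (δ : ℝ)
    (S0 : Set (Finset (Sym2 V))) : EReal :=
  sInf { c : EReal | ∃ (ν : ProbMeas V) (F : Finset (Sym2 V)) (q : V → V → ℝ),
    F ∈ S0 ∧ q ∈ TE F ∧ (∀ x, ν.1 x ≠ 0 → memVerts F x) ∧ Invariant ν.1 q ∧
    c = relEntInt ν.1 q (phat G δ F) }

/-- `α_c^1(δ)`: the critical exponent for the cover time. -/
def alphaC1 (G : SimpleGraph V) [DecidableRel G.Adj] (v₁ : V) (δ : ℝ) : EReal :=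
  alphaC G δ (scrS G v₁ \ {G.edgeFinset})

end Graph

section Lifted

variable {V : Type} [Fintype V] [LinearOrder V]

/-- Smaller endpoint of an unordered pair. -/
def sym2lo (e : Sym2 V) : V := Sym2.lift ⟨fun a b => min a b, fun a b => min_comm a b⟩ e

/-- Larger endpoint of an unordered pair. -/
def sym2hi (e : Sym2 V) : V := Sym2.lift ⟨fun a b => max a b, fun a b => max_comm a b⟩ e

/-- `V_S = E × {-1, 1}`: vertex set of the lifted directed graph `S`
(`true` plays the role of `+1`). -/
abbrev VSet (G : SimpleGraph V) [DecidableRel G.Adj] : Type :=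
  {e : Sym2 V // e ∈ G.edgeFinset} × Bool

/-- Tail `z⁻` of an oriented edge. -/
def zm (G : SimpleGraph V) [DecidableRel G.Adj] (z : VSet G) : V :=
  if z.2 then sym2lo z.1.1 else sym2hi z.1.1

/-- Head `z⁺` of an oriented edge. -/
def zp (G : SimpleGraph V) [DecidableRel G.Adj] (z : VSet G) : V :=
  if z.2 then sym2hi z.1.1 else sym2lo z.1.1

/-- The kernel `p_F` on the lifted directed graph `S`. -/
def pS (G : SimpleGraph V) [DecidableRel G.Adj] (δ : ℝ) (F : Finset (Sym2 V))
    (z₁ z₂ : VSet G) : ℝ :=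
  if zp G z₁ = zm G z₂ then
    gw δ F z₂.1.1 / ∑ w : VSet G, (if zp G z₁ = zm G w then gw δ F w.1.1 else 0)
  else 0

/-- `𝒯_S`: stochastic matrices on `V_S` moving along orientations. -/
def TS (G : SimpleGraph V) [DecidableRel G.Adj] : Set (VSet G → VSet G → ℝ) :=
  {q | (∀ z w, 0 ≤ q z w) ∧ (∀ z, ∑ w, q z w = 1) ∧ ∀ z w, q z w ≠ 0 → zp G z = zm G w}

/-- `𝒞(𝒮₀)`: probability measures on `V_S` whose first marginal is supported in
some member of `𝒮₀`. -/
def CC (G : SimpleGraph V) [DecidableRel G.Adj] (S0 : Set (Finset (Sym2 V))) :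
    Set (ProbMeas (VSet G)) :=
  {μ | ∃ F ∈ S0, ∀ z : VSet G, μ.1 z ≠ 0 → z.1.1 ∈ F}

/-- `Λ_{δ,𝒮₀}`. -/
def Lam (G : SimpleGraph V) [DecidableRel G.Adj] (v₁ : V) (δ : ℝ)
    (S0 : Set (Finset (Sym2 V))) (μ : ProbMeas (VSet G)) : EReal :=
  sInf { c : EReal |
    ∃ (μs : Fin G.edgeFinset.card → ProbMeas (VSet G)) (r : Fin G.edgeFinset.card → ℝ)
      (Es : Fin G.edgeFinset.card → Finset (Sym2 V))
      (qs : Fin G.edgeFinset.card → VSet G → VSet G → ℝ),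
      Es ∈ seqE G v₁ ∧ (∀ k, 0 ≤ r k) ∧ (∀ k, Es k ∉ S0 → r k = 0) ∧ (∑ k, r k = 1) ∧
      (∀ k z, (μs k).1 z ≠ 0 → z.1.1 ∈ Es k) ∧
      (∀ z, ∑ k, r k * (μs k).1 z = μ.1 z) ∧
      (∀ k, qs k ∈ TS G) ∧ (∀ k, Invariant (μs k).1 (qs k)) ∧
      c = ∑ k, ((r k : ℝ) : EReal) * relEntInt (μs k).1 (qs k) (pS G δ (Es k)) }

/-- `Λ^z_{δ,𝒮₀}`. -/
def LamZ (G : SimpleGraph V) [DecidableRel G.Adj] (v₁ : V) (δ : ℝ)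
    (S0 : Set (Finset (Sym2 V))) (z : VSet G) (μ : ProbMeas (VSet G)) : EReal :=
  sInf { c : EReal |
    ∃ (μs : Fin G.edgeFinset.card → ProbMeas (VSet G)) (r : Fin G.edgeFinset.card → ℝ)
      (Es : Fin G.edgeFinset.card → Finset (Sym2 V))
      (qs : Fin G.edgeFinset.card → VSet G → VSet G → ℝ),
      Es ∈ seqE G v₁ ∧ (∀ k : Fin G.edgeFinset.card, (k : ℕ) = 0 → Es k = {z.1.1}) ∧
      (∀ k, 0 ≤ r k) ∧ (∀ k, Es k ∉ S0 → r k = 0) ∧ (∑ k, r k = 1) ∧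
      (∀ k w, (μs k).1 w ≠ 0 → w.1.1 ∈ Es k) ∧
      (∀ w, ∑ k, r k * (μs k).1 w = μ.1 w) ∧
      (∀ k, qs k ∈ TS G) ∧ (∀ k, Invariant (μs k).1 (qs k)) ∧
      c = ∑ k, ((r k : ℝ) : EReal) * relEntInt (μs k).1 (qs k) (pS G δ (Es k)) }

/-- `Λ₁`: the Donsker–Varadhan functional for the simple random walk on `S`
(whose kernel is `pS` with `δ = 1`). -/
def Lam1 (G : SimpleGraph V) [DecidableRel G.Adj] (μ : ProbMeas (VSet G)) : EReal :=
  sInf { c : EReal | ∃ q ∈ TS G, Invariant μ.1 q ∧ c = relEntInt μ.1 q (pS G 1 ∅) }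

/-- Boundary `∂F` of an edge set: edges of `F` adjacent to some edge outside `F`. -/
def bdry (G : SimpleGraph V) [DecidableRel G.Adj] (F : Finset (Sym2 V)) : Finset (Sym2 V) :=
  F.filter fun e => ∃ e' ∈ G.edgeFinset \ F, edgeAdj e e'

/-- Out-degree `d(z)` of `z` in `S`. -/
def outDeg (G : SimpleGraph V) [DecidableRel G.Adj] (z : VSet G) : ℕ :=
  (Finset.univ.filter (fun w : VSet G => zp G z = zm G w)).card

/-- Number `k(z)` of out-neighbours of `z` lying in `F × {-1, 1}`. -/
def outDegIn (G : SimpleGraph V) [DecidableRel G.Adj] (F : Finset (Sym2 V))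
    (z : VSet G) : ℕ :=
  (Finset.univ.filter (fun w : VSet G => zp G z = zm G w ∧ w.1.1 ∈ F)).card

/-- The law of `(Z_0, …, Z_n)` for the lifted `δ`-ORRW conditioned on `Z_0 = z`. -/
def liftTraj (G : SimpleGraph V) [DecidableRel G.Adj] (δ : ℝ) (z : VSet G) (n : ℕ)
    (g : Fin (n + 1) → VSet G) : ℝ :=
  if g 0 = z then
    ∏ i : Fin n,
      pS G δ ((Finset.Iic i.castSucc).image (fun j => (g j).1.1))
        (g i.castSucc) (g i.succ)
  else 0

/-- The restricted logarithmic Laplace functional `W^{n+1}_{𝒮₀}(z)`. -/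
def Wres (G : SimpleGraph V) [DecidableRel G.Adj] (δ : ℝ) (z : VSet G)
    (S0 : Set (Finset (Sym2 V))) (h : ProbMeas (VSet G) → ℝ) (n : ℕ) : EReal :=
  if 0 < ∑ g : Fin (n + 1) → VSet G,
      (if empMeas n g ∈ CC G S0 then liftTraj G δ z n g else 0) then
    ((-((((n : ℝ) + 1))⁻¹ * Real.log (∑ g : Fin (n + 1) → VSet G,
      if empMeas n g ∈ CC G S0 then
        Real.exp (-((n : ℝ) + 1) * h (empMeas n g)) * liftTraj G δ z n g
      else 0)) : ℝ) : EReal)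
  else (⊤ : EReal)

end Lifted

/-!
In `Λ`, any tuple has a cost that is a convex combination of one-block costs, so it is at least the
infimum of the one-block costs. Conversely, one block `(μ, F, q)` with `F ∈ 𝒮₀` is turned into a
tuple by putting all the weight on it. This needs an admissible sequence of edge sets passing
through `F`: since both `F` and the whole edge set are connected, one grows from a single edge at
`v₁` to `F`, and then to all edges, by adding one adjacent edge at a time. The blocks of weight zero
must still carry some invariant measure, for which we take the walk shuttling along one edge.
-/

section Weights

lemma le_sum_coe_mul_of_forall_le {ι : Type*} {s : Finset ι} {r : ι → ℝ} {c : ι → EReal}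
    {m : EReal} (hr : ∀ i ∈ s, 0 ≤ r i) (hsum : ∑ i ∈ s, r i = 1)
    (hm : ∀ i ∈ s, r i ≠ 0 → m ≤ c i) : m ≤ ∑ i ∈ s, (r i : EReal) * c i := by
  have sum_mul_le : ∀ t ⊆ s, ((∑ i ∈ t, r i : ℝ) : EReal) * m ≤ ∑ i ∈ t, (r i : EReal) * c i := by
    intro t
    induction t using Finset.induction_on with
    | empty => simp
    | insert i t hi ih =>
      intro hts
      obtain ⟨his, hts⟩ := Finset.insert_subset_iff.mp hts
      have hri : (0 : EReal) ≤ r i := EReal.coe_nonneg.mpr (hr i his)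
      have hrt : (0 : EReal) ≤ (∑ j ∈ t, r j : ℝ) :=
        EReal.coe_nonneg.mpr (Finset.sum_nonneg fun j hj => hr j (hts hj))
      rw [Finset.sum_insert hi, Finset.sum_insert hi, EReal.coe_add,
        EReal.right_distrib_of_nonneg hri hrt]
      refine add_le_add ?_ (ih hts)
      rcases eq_or_ne (r i) 0 with h0 | h0
      · simp [h0]
      · exact mul_le_mul_of_nonneg_left (hm i his h0) hri
  simpa [hsum] using sum_mul_le s subset_rfl

end Weights

section Growth

variable {V : Type} {A B C F : Finset (Sym2 V)} {c : ℕ → Finset (Sym2 V)}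

/-- The subgraph induced by the edge set `F` is connected; this is the connectedness clause in the
definition of `𝒮`. The empty edge set counts as connected. -/
def EdgesConnected (F : Finset (Sym2 V)) : Prop :=
  ∀ x y : V, memVerts F x → memVerts F y →
    (SimpleGraph.fromEdgeSet (↑F : Set (Sym2 V))).Reachable x y

lemma memVerts_of_reachable (hA : ∀ e ∈ B, ∀ e' ∈ A, edgeAdj e e' → e ∈ A) {x y : V}
    (hxy : (SimpleGraph.fromEdgeSet (↑B : Set (Sym2 V))).Reachable x y) (hx : memVerts A x) :
    memVerts A y := by
  obtain ⟨w⟩ := hxy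
  induction w with
  | nil => exact hx
  | @cons u v _ huv _ ih =>
    obtain ⟨e', he', hu⟩ := hx
    have huvB : s(u, v) ∈ B := ((SimpleGraph.fromEdgeSet_adj _).mp huv).1
    exact ih ⟨s(u, v), hA _ huvB e' he' ⟨u, Sym2.mem_mk_left u v, hu⟩, Sym2.mem_mk_right u v⟩

lemma EdgesConnected.exists_edgeAdj_of_ssubset (hB : EdgesConnected B) (hAB : A ⊂ B)
    (hA : A.Nonempty) : ∃ e ∈ B, e ∉ A ∧ ∃ e' ∈ A, edgeAdj e e' := by
  by_contra! hclosed
  obtain ⟨e₀, he₀⟩ := hA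
  obtain ⟨e, heB, heA⟩ := Finset.exists_of_ssubset hAB
  obtain ⟨x, hx⟩ : ∃ x, x ∈ e₀ := ⟨_, Sym2.out_fst_mem e₀⟩
  obtain ⟨y, hy⟩ : ∃ y, y ∈ e := ⟨_, Sym2.out_fst_mem e⟩
  have hreach := hB x y ⟨e₀, hAB.subset he₀, hx⟩ ⟨e, heB, hy⟩
  obtain ⟨e', he', hye'⟩ : memVerts A y := by
    refine memVerts_of_reachable (fun f hfB f' hf' hadj => ?_) hreach ⟨e₀, he₀, hx⟩
    by_contra hfA
    exact hclosed f hfB hfA f' hf' hadj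
  exact hclosed e heB heA e' he' ⟨y, hy, hye'⟩

lemma edgesConnected_edgeFinset {G : SimpleGraph V} [Fintype G.edgeSet]
    (hG : G.Preconnected) : EdgesConnected G.edgeFinset := by
  intro x y _ _
  rw [SimpleGraph.coe_edgeFinset, SimpleGraph.fromEdgeSet_edgeSet]
  exact hG x y

variable [DecidableEq V]

/-- `B` arises from `A` by adding one new edge, adjacent to an edge of `A`: the passage from `E_k`
to `E_{k+1}` in a sequence of `ℰ`. -/
def IsGrowthStep (A B : Finset (Sym2 V)) : Prop :=
  ∃ e ∉ A, (∃ e' ∈ A, edgeAdj e e') ∧ insert e A = B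

lemma IsGrowthStep.ssubset (h : IsGrowthStep A B) : A ⊂ B := by
  obtain ⟨e, heA, -, rfl⟩ := h
  exact Finset.ssubset_insert heA

lemma IsGrowthStep.card_eq (h : IsGrowthStep A B) : B.card = A.card + 1 := by
  obtain ⟨e, heA, -, rfl⟩ := h
  exact Finset.card_insert_of_notMem heA

lemma IsGrowthStep.exists_edgeAdj (h : IsGrowthStep A B) {e : Sym2 V} (heB : e ∈ B)
    (heA : e ∉ A) : ∃ e' ∈ A, edgeAdj e e' := by
  obtain ⟨f, -, hadj, rfl⟩ := h
  obtain rfl : e = f := (Finset.mem_insert.mp heB).resolve_right heA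
  exact hadj

lemma EdgesConnected.exists_isGrowthStep (hB : EdgesConnected B) (hAB : A ⊂ B)
    (hA : A.Nonempty) : ∃ A' ⊆ B, IsGrowthStep A A' := by
  obtain ⟨e, heB, heA, hadj⟩ := hB.exists_edgeAdj_of_ssubset hAB hA
  exact ⟨insert e A, Finset.insert_subset heB hAB.subset, e, heA, hadj, rfl⟩

/-- The sequence `c` grows from `A` to `B` by adding adjacent edges one at a time. It is indexed by
cardinality, and its values outside `[|A|, |B|]` are irrelevant. -/
structure IsGrowthChain (c : ℕ → Finset (Sym2 V)) (A B : Finset (Sym2 V)) : Prop where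
  card_le : A.card ≤ B.card
  start : c A.card = A
  finish : c B.card = B
  step : ∀ n, A.card ≤ n → n < B.card → IsGrowthStep (c n) (c (n + 1))

namespace IsGrowthChain

lemma subset (h : IsGrowthChain c A B) {m n : ℕ} (hm : A.card ≤ m) (hmn : m ≤ n)
    (hn : n ≤ B.card) : c m ⊆ c n := by
  induction n, hmn using Nat.le_induction with
  | base => exact subset_rfl
  | succ n hmn ih => exact (ih (by omega)).trans (h.step n (by omega) (by omega)).ssubset.subset

lemma card_eq (h : IsGrowthChain c A B) {n : ℕ} (hAn : A.card ≤ n) (hn : n ≤ B.card) :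
    (c n).card = n := by
  induction n, hAn using Nat.le_induction with
  | base => rw [h.start]
  | succ n hAn ih => rw [(h.step n hAn (by omega)).card_eq, ih (by omega)]

lemma const (A : Finset (Sym2 V)) : IsGrowthChain (fun _ => A) A A :=
  ⟨le_rfl, rfl, rfl, fun _ _ _ => by omega⟩

lemma exists_trans {c d : ℕ → Finset (Sym2 V)} (hc : IsGrowthChain c A B)
    (hd : IsGrowthChain d B C) : ∃ c', IsGrowthChain c' A C ∧ c' B.card = B := by
  set c' : ℕ → Finset (Sym2 V) := fun n => if n ≤ B.card then c n else d n
  have eq_left : ∀ n ≤ B.card, c' n = c n := fun n hn => if_pos hn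
  have eq_right : ∀ n, B.card ≤ n → c' n = d n := by
    intro n hn
    rcases hn.eq_or_lt with rfl | hn
    · rw [eq_left _ le_rfl, hc.finish, hd.start]
    · exact if_neg hn.not_ge
  refine ⟨c', ⟨hc.card_le.trans hd.card_le, ?_, ?_, fun n hAn hnC => ?_⟩, ?_⟩
  · rw [eq_left _ hc.card_le, hc.start]
  · rw [eq_right _ hd.card_le, hd.finish]
  · rcases lt_or_ge n B.card with hn | hn
    · rw [eq_left n hn.le, eq_left (n + 1) hn]
      exact hc.step n hAn hn
    · rw [eq_right n hn, eq_right (n + 1) (by omega)]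
      exact hd.step n hn hnC
  · rw [eq_left _ le_rfl, hc.finish]

end IsGrowthChain

lemma IsGrowthStep.exists_isGrowthChain (h : IsGrowthStep A B) : ∃ c, IsGrowthChain c A B := by
  have hcard := h.card_eq
  refine ⟨fun n => if n ≤ A.card then A else B, by omega, if_pos le_rfl, if_neg (by omega),
    fun n hAn hnB => ?_⟩
  obtain rfl : n = A.card := by omega
  simpa using h

lemma EdgesConnected.exists_isGrowthChain (hB : EdgesConnected B) (hA : A.Nonempty)
    (hAB : A ⊆ B) : ∃ c, IsGrowthChain c A B := by
  induction hn : B.card - A.card generalizing A with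
  | zero =>
    obtain rfl : A = B := Finset.eq_of_subset_of_card_le hAB (by omega)
    exact ⟨_, .const A⟩
  | succ n ih =>
    have hssub : A ⊂ B := hAB.ssubset_of_ne (by rintro rfl; omega)
    obtain ⟨A', hA'B, hstep⟩ := hB.exists_isGrowthStep hssub hA
    have hcard := hstep.card_eq
    obtain ⟨c, hc⟩ := hstep.exists_isGrowthChain
    obtain ⟨d, hd⟩ := ih (hA.mono hstep.ssubset.subset) hA'B (by omega)
    obtain ⟨c', hc', -⟩ := hc.exists_trans hd
    exact ⟨c', hc'⟩

variable [Fintype V] {G : SimpleGraph V} [DecidableRel G.Adj] {v₁ : V}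

/-- Positions in `ℰ` count from `0`, so the set at position `k` has `k + 1` edges. -/
lemma IsGrowthChain.mem_seqE {e : Sym2 V} (hc : IsGrowthChain c {e} G.edgeFinset)
    (he : v₁ ∈ e) : (fun k : Fin G.edgeFinset.card => c (k + 1)) ∈ seqE G v₁ := by
  have hc₁ : c 1 = {e} := hc.start
  refine ⟨fun k => ?_, fun k => hc.card_eq (by simp) k.2, ?_, fun k hk => ⟨e, ?_, he⟩, ?_⟩
  · simpa only [hc.finish] using hc.subset (m := k + 1) (by simp) k.2 le_rfl
  · intro k l hkl
    simpa only [hkl] using (hc.step (k + 1) (by simp) (by omega)).ssubset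
  · simp [hk, hc₁]
  · intro k l hkl f hf
    obtain ⟨hfl, hfk⟩ := Finset.mem_sdiff.mp hf
    refine (hc.step (k + 1) (by simp) (by omega)).exists_edgeAdj ?_ hfk
    simpa only [hkl] using hfl

lemma exists_mem_seqE_apply_eq (hG : EdgesConnected G.edgeFinset) (hF : F ∈ scrS G v₁) :
    ∃ Es ∈ seqE G v₁, ∃ k, Es k = F := by
  obtain ⟨hFG, ⟨e, heF, hev₁⟩, hFconn⟩ := hF
  have hFpos : 0 < F.card := Finset.card_pos.mpr ⟨e, heF⟩
  have hFle : F.card ≤ G.edgeFinset.card := Finset.card_le_card hFG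
  obtain ⟨c, hc⟩ := EdgesConnected.exists_isGrowthChain hFconn (Finset.singleton_nonempty e)
    (Finset.singleton_subset_iff.mpr heF)
  obtain ⟨d, hd⟩ := hG.exists_isGrowthChain ⟨e, heF⟩ hFG
  obtain ⟨c', hc', hc'F⟩ := hc.exists_trans hd
  refine ⟨_, hc'.mem_seqE hev₁, ⟨F.card - 1, by omega⟩, ?_⟩
  simpa only [Nat.sub_add_cancel hFpos] using hc'F

end Growth

section Blocks

lemma Invariant.of_comp_involutive {A : Type} [Fintype A] [DecidableEq A] {ν : A → ℝ}
    {σ : A → A} (hσ : σ.Involutive) (hν : ∀ a, ν (σ a) = ν a) :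
    Invariant ν fun a => Pi.single (σ a) 1 := by
  intro b
  rw [Fintype.sum_eq_single (σ b) fun a ha => ?_]
  · simp [hσ b, hν b]
  · have hb : b ≠ σ a := fun hb => ha (by rw [hb, hσ a])
    simp [hb]

variable {V : Type} [Fintype V] {G : SimpleGraph V} [DecidableRel G.Adj]

/-- Reversal of orientation; iterating it is the walk that shuttles along one edge. -/
def reverse (z : VSet G) : VSet G := (z.1, !z.2)

lemma reverse_involutive : (reverse (G := G)).Involutive := fun z => by simp [reverse]

variable [LinearOrder V] {v₁ : V} {δ : ℝ} {S0 : Set (Finset (Sym2 V))} {F : Finset (Sym2 V)}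
  {μ : ProbMeas (VSet G)} {q : VSet G → VSet G → ℝ}

lemma zp_eq_zm_reverse (z : VSet G) : zp G z = zm G (reverse z) := by
  rcases z with ⟨e, _ | _⟩ <;> rfl

lemma single_reverse_mem_TS : (fun z => Pi.single (reverse z) 1) ∈ TS G := by
  refine ⟨fun z => ?_, fun z => ?_, fun z w hzw => ?_⟩
  · exact (Pi.single_nonneg (α := fun _ => ℝ)).mpr zero_le_one
  · simp
  · obtain rfl : w = reverse z := by
      by_contra hw
      exact hzw (Pi.single_eq_of_ne hw 1)
    exact zp_eq_zm_reverse z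

/-- The uniform measure on the two orientations of the edge `e`, the invariant measure of the walk
that shuttles along `e`. -/
def uniformOnOrientations (e : {e : Sym2 V // e ∈ G.edgeFinset}) : ProbMeas (VSet G) :=
  ⟨fun z => if z.1 = e then 1 / 2 else 0, fun z => by positivity, by
    rw [Fintype.sum_prod_type]
    simp⟩

/-- A block over `F`: a kernel of `𝒯_S` with an invariant probability measure living on the oriented
edges of `F`. It is what each index `k` of a tuple in `𝒜(μ, 𝒮₀)` carries. -/
structure IsBlock (F : Finset (Sym2 V)) (μ : ProbMeas (VSet G)) (q : VSet G → VSet G → ℝ) :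
    Prop where
  mem_TS : q ∈ TS G
  support : ∀ z : VSet G, μ.1 z ≠ 0 → z.1.1 ∈ F
  invariant : Invariant μ.1 q

lemma exists_isBlock (hF : F.Nonempty) (hFG : F ⊆ G.edgeFinset) :
    ∃ (μ : ProbMeas (VSet G)) (q : VSet G → VSet G → ℝ), IsBlock F μ q := by
  obtain ⟨e, he⟩ := hF
  refine ⟨uniformOnOrientations ⟨e, hFG he⟩, _, single_reverse_mem_TS, fun z hz => ?_,
    .of_comp_involutive reverse_involutive fun _ => rfl⟩
  obtain ⟨hze, -⟩ := ite_ne_right_iff.mp hz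
  rwa [hze]

lemma Lam_le_relEntInt {Es : Fin G.edgeFinset.card → Finset (Sym2 V)} (hEs : Es ∈ seqE G v₁)
    {k : Fin G.edgeFinset.card} (hk : Es k ∈ S0) (hμ : IsBlock (Es k) μ q) :
    Lam G v₁ δ S0 μ ≤ relEntInt μ.1 q (pS G δ (Es k)) := by
  have exists_block : ∀ j, ∃ (ν : ProbMeas (VSet G)) (κ : VSet G → VSet G → ℝ),
      IsBlock (Es j) ν κ ∧ (j = k → ν = μ ∧ κ = q) := by
    intro j
    rcases eq_or_ne j k with rfl | hjk
    · exact ⟨μ, q, hμ, fun _ => ⟨rfl, rfl⟩⟩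
    · have hne : (Es j).Nonempty := Finset.card_pos.mp (by rw [hEs.2.1 j]; omega)
      obtain ⟨ν, κ, hν⟩ := exists_isBlock hne (hEs.1 j)
      exact ⟨ν, κ, hν, fun h => absurd h hjk⟩
  choose νs κs hblock hνκ using exists_block
  obtain ⟨hνk, hκk⟩ := hνκ k rfl
  refine sInf_le ⟨νs, Pi.single k 1, Es, κs, hEs, fun j => ?_, fun j hj => ?_, by simp,
    fun j => (hblock j).support, fun z => ?_, fun j => (hblock j).mem_TS,
    fun j => (hblock j).invariant, ?_⟩
  · exact (Pi.single_nonneg (α := fun _ => ℝ)).mpr zero_le_one j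
  · exact Pi.single_eq_of_ne (by rintro rfl; exact hj hk) 1
  · rw [Fintype.sum_eq_single k fun j hj => by simp [hj]]
    simp [hνk]
  · rw [Fintype.sum_eq_single k fun j hj => by simp [hj]]
    simp [hνk, hκk]

lemma le_Lam {m : EReal}
    (hm : ∀ F ∈ S0, ∀ ν q, IsBlock F ν q → m ≤ relEntInt ν.1 q (pS G δ F)) :
    m ≤ Lam G v₁ δ S0 μ := by
  refine le_sInf ?_
  rintro _ ⟨μs, r, Es, qs, -, hr, hr0, hsum, hsupp, -, hqs, hinv, rfl⟩
  refine le_sum_coe_mul_of_forall_le (fun k _ => hr k) hsum fun k _ hrk => ?_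
  exact hm (Es k) (not_imp_comm.mp (hr0 k) hrk) (μs k) (qs k) ⟨hqs k, hsupp k, hinv k⟩

end Blocks

theorem orrw_alpha_expression_general {V : Type} [Fintype V] [LinearOrder V]
    (G : SimpleGraph V) [DecidableRel G.Adj] (hG : EdgesConnected G.edgeFinset)
    (v₁ : V) (δ : ℝ) (S0 : Set (Finset (Sym2 V))) (hS0sub : S0 ⊆ scrS G v₁) :
    sInf (Lam G v₁ δ S0 '' CC G S0) =
      sInf { c : EReal |
        ∃ (μ : ProbMeas (VSet G)) (F : Finset (Sym2 V)) (q : VSet G → VSet G → ℝ),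
          F ∈ S0 ∧ q ∈ TS G ∧ (∀ z : VSet G, μ.1 z ≠ 0 → z.1.1 ∈ F) ∧
          Invariant μ.1 q ∧ c = relEntInt μ.1 q (pS G δ F) } := by
  apply le_antisymm
  · refine le_sInf ?_
    rintro _ ⟨μ, F, q, hF, hq, hsupp, hinv, rfl⟩
    obtain ⟨Es, hEs, k, rfl⟩ := exists_mem_seqE_apply_eq hG (hS0sub hF)
    have hμ : μ ∈ CC G S0 := ⟨Es k, hF, hsupp⟩
    exact (sInf_le (Set.mem_image_of_mem _ hμ)).trans (Lam_le_relEntInt hEs hF ⟨hq, hsupp, hinv⟩)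
  · refine le_sInf ?_
    rintro _ ⟨μ, -, rfl⟩
    exact le_Lam fun F hF ν q hν =>
      sInf_le ⟨ν, F, q, hF, hν.mem_TS, hν.support, hν.invariant, rfl⟩

/-- A one-block expression for `inf_{μ ∈ 𝒞(𝒮₀)} Λ_{δ,𝒮₀}(μ)`. -/
theorem orrw_alpha_expression {V : Type} [Fintype V] [LinearOrder V]
    (G : SimpleGraph V) [DecidableRel G.Adj] (hG : G.Connected)
    (hV : 3 ≤ Fintype.card V) (v₁ : V) (δ : ℝ) (hδ : 0 < δ)
    (S0 : Set (Finset (Sym2 V))) (hS0ne : S0.Nonempty) (hS0sub : S0 ⊆ scrS G v₁)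
    (hS0dec : DecreasingIn G v₁ S0) :
    sInf (Lam G v₁ δ S0 '' CC G S0) =
      sInf { c : EReal |
        ∃ (μ : ProbMeas (VSet G)) (F : Finset (Sym2 V)) (q : VSet G → VSet G → ℝ),
          F ∈ S0 ∧ q ∈ TS G ∧ (∀ z : VSet G, μ.1 z ≠ 0 → z.1.1 ∈ F) ∧
          Invariant μ.1 q ∧ c = relEntInt μ.1 q (pS G δ F) } := by
  exact orrw_alpha_expression_general G (edgesConnected_edgeFinset hG.preconnected) v₁ δ S0 hS0sub

end ORRW
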